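/- arXiv:math/0008142 — 4 statements merged into one kernel-verified Lean document; each statement's English description precedes it below -/
import Mathlib

section
/- (Third Rank Theorem) Let K be a division ring and R = K[t]. For any nonzero polynomials g, h ∈ R with f := g·h, one has rk(V(f)) ≤ rk(V(g)) + rk(V(h)). -/
/-!
Write `R = K[X]`, `Δ = V(gh)` and `f^a = f(a) a f(a)⁻¹`, so that `(uf)(a) = u(f^a) f(a)`
(`eval_mul_conj`). Two facts about `p`, `q`, `r` give the inequality.

* The product formula shows that `q h` vanishes on `V(gh)`, so `q h ∈ R p`.
* `r ∈ R p + R h` (`mem_sup_of_vanishing`). The module `R / R p` is complemented, because `R p` is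
  an intersection of left ideals `R (X - a)` of codimension one and `R / R p` is finite-dimensional
  over `K`. So, for `J = R p + R h`, there is an `e` with `1 - e ∈ J` and `J e ⊆ R p`
  (`exists_projection`). If `a ∈ Δ` and `e(a) ≠ 0`, then `h e ∈ R p` forces `h(e^a) = 0`, hence
  `r(e^a) = 0`. Thus `r e` vanishes on `Δ`, so `r e ∈ R p`, and `r = r e + r (1 - e) ∈ J`.

Consequently right multiplication by `h` induces a map `R / R q → R / R p` whose image contains
`R r / R p`; comparing `K`-dimensions gives `deg p - deg r ≤ deg q`.
-/

open Polynomial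

/-- The zero set `V(f) = {a ∈ K : f(a) = 0}`. -/
def zeroSet {K : Type*} [DivisionRing K] (f : K[X]) : Set K := {a : K | f.eval a = 0}

/-- `f` is the minimal polynomial of `Δ`: the monic generator of the left ideal of
polynomials vanishing on `Δ`. -/
def IsMinPolyOf {K : Type*} [DivisionRing K] (Δ : Set K) (f : K[X]) : Prop :=
  f.Monic ∧ ∀ g : K[X], (∀ a ∈ Δ, g.eval a = 0) ↔ ∃ q : K[X], g = q * f


/-- The product formula, with the conjugating relation as a hypothesis; when `g(a) = 0` the point
`c` is arbitrary. -/
lemma eval_mul_of_semiconj {K : Type*} [DivisionRing K] (f g : K[X]) (a c : K)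
    (h : SemiconjBy (g.eval a) a c) : (f * g).eval a = f.eval c * g.eval a := by
  induction f using Polynomial.induction_on' with
  | add f₁ f₂ h₁ h₂ => rw [add_mul, eval_add, eval_add, add_mul, h₁, h₂]
  | monomial n b =>
    have hX : (X ^ n : K[X]).eval c = c ^ n := by
      simpa using eval_mul_X_pow (p := (1 : K[X])) (x := c) (k := n)
    rw [← C_mul_X_pow_eq_monomial, mul_assoc, eval_C_mul, X_pow_mul, eval_mul_X_pow, eval_C_mul, hX,
      mul_assoc, (h.pow_right n).eq]

lemma eval_mul_conj {K : Type*} [DivisionRing K] (f g : K[X]) (a : K) :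
    (f * g).eval a = f.eval (g.eval a * a * (g.eval a)⁻¹) * g.eval a := by
  apply eval_mul_of_semiconj
  by_cases h : g.eval a = 0
  · simp [h, SemiconjBy]
  · simp [SemiconjBy, mul_assoc, h]

/-- Division with remainder by a monic polynomial standing on the right; `%ₘ` divides on the
other side. -/
lemma exists_right_division {K : Type*} [DivisionRing K] (p : K[X]) (hp : p.Monic) (f : K[X]) :
    ∃ s b : K[X], f = s * p + b ∧ b ∈ degreeLT K p.natDegree := by
  induction hd : f.degree using WellFoundedLT.induction generalizing f with
  | ind d ih =>
    by_cases hlt : f.degree < p.degree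
    · refine ⟨0, f, by simp, ?_⟩
      rwa [mem_degreeLT, ← degree_eq_natDegree hp.ne_zero]
    have hle : p.degree ≤ f.degree := not_lt.mp hlt
    have hf : f ≠ 0 := by
      rintro rfl
      rw [degree_zero, le_bot_iff, degree_eq_bot] at hle
      exact hp.ne_zero hle
    have hnle : p.natDegree ≤ f.natDegree := natDegree_le_natDegree hle
    set m : K[X] := C f.leadingCoeff * X ^ (f.natDegree - p.natDegree) with hm
    have hmdeg : m.degree = ((f.natDegree - p.natDegree : ℕ) : WithBot ℕ) :=
      degree_C_mul_X_pow _ (leadingCoeff_ne_zero.mpr hf)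
    have hdeg : f.degree = (m * p).degree := by
      rw [degree_mul, hmdeg, degree_eq_natDegree hp.ne_zero, degree_eq_natDegree hf]
      norm_cast
      omega
    have hlc : f.leadingCoeff = (m * p).leadingCoeff := by
      rw [leadingCoeff_mul, hp.leadingCoeff, hm, leadingCoeff_mul]
      simp
    obtain ⟨s, b, hs, hb⟩ := ih _ (hd ▸ degree_sub_lt_left hdeg hf hlc) (f - m * p) rfl
    exact ⟨s + m, b, by rw [add_mul, add_right_comm, ← hs]; abel, hb⟩

/-- Every left ideal `J` has a complement `L` modulo the left ideal of polynomials vanishing on `Δ`.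
A minimal `L ∋ p` with `L ⊔ J = ⊤` works: an `x ∈ L ⊓ J` with `x(a) ≠ 0` for some `a ∈ Δ` would
allow shrinking `L` to the polynomials in `L` that vanish at `a`. -/
lemma exists_complement {K : Type*} [DivisionRing K] (Δ : Set K) (p : K[X])
    (hp : IsMinPolyOf Δ p) (J : Ideal K[X]) :
    ∃ L : Ideal K[X], L ⊔ J = ⊤ ∧
      ∀ x ∈ L, x ∈ J → ∀ a ∈ Δ, x.eval a = 0 := by
  have : FiniteDimensional K (degreeLT K p.natDegree) :=
    Module.Finite.equiv (degreeLTEquiv K p.natDegree).symm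
  let μ : Ideal K[X] → ℕ := fun L =>
    Module.finrank K (L.restrictScalars K ⊓ degreeLT K p.natDegree : Submodule K K[X])
  let S : Set (Ideal K[X]) := {L | p ∈ L ∧ L ⊔ J = ⊤}
  have hS : S.Nonempty := ⟨⊤, by simp [S]⟩
  obtain ⟨L, ⟨hpL, hLJ⟩, hmin⟩ : ∃ L ∈ S, ∀ L' ∈ S, ¬ μ L' < μ L :=
    ⟨_, Function.argminOn_mem μ S hS, fun L' hL' => Function.not_lt_argminOn μ S hL'⟩
  refine ⟨L, hLJ, fun x hxL hxJ a ha => ?_⟩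
  by_contra hxa
  let L' : Ideal K[X] :=
    { carrier := {y | y ∈ L ∧ y.eval a = 0}
      add_mem' := fun hy hz => ⟨L.add_mem hy.1 hz.1, by rw [eval_add, hy.2, hz.2, add_zero]⟩
      zero_mem' := ⟨L.zero_mem, eval_zero⟩
      smul_mem' := fun c y hy => ⟨L.smul_mem c hy.1, by
        rw [smul_eq_mul, eval_mul_conj, hy.2, mul_zero]⟩ }
  have hpa : p.eval a = 0 := (hp.2 p).mpr ⟨1, (one_mul p).symm⟩ a ha
  have hpL' : p ∈ L' := ⟨hpL, hpa⟩
  have htop : L' ⊔ J = ⊤ := by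
    rw [eq_top_iff, ← hLJ]
    refine sup_le (fun c hc => ?_) le_sup_right
    have hc' : c - C (c.eval a * (x.eval a)⁻¹) * x ∈ L' :=
      ⟨L.sub_mem hc (L.mul_mem_left _ hxL), by simp [eval_C_mul, mul_assoc, hxa]⟩
    rw [← sub_add_cancel c (C (c.eval a * (x.eval a)⁻¹) * x)]
    exact Submodule.add_mem_sup hc' (J.mul_mem_left _ hxJ)
  refine hmin L' ⟨hpL', htop⟩ (Submodule.finrank_lt_finrank_of_lt (lt_of_le_of_ne ?_ ?_))
  · exact fun y hy => ⟨hy.1.1, hy.2⟩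
  · intro heq
    -- The remainder of `x` modulo `p` lies in `L`, so by `heq` also in `L'`; so would `x`.
    obtain ⟨s, b, hx, hb⟩ := exists_right_division p hp.1 x
    have hbL : b ∈ L := by
      have : b = x - s * p := by rw [hx]; abel
      rw [this]
      exact L.sub_mem hxL (L.mul_mem_left _ hpL)
    have hb' : b ∈ (L'.restrictScalars K ⊓ degreeLT K p.natDegree : Submodule K K[X]) := by
      rw [heq]
      exact ⟨hbL, hb⟩
    apply hxa
    rw [hx, eval_add, eval_mul_conj, hpa, mul_zero, zero_add]
    exact hb'.1.2

/-- For `J ⊇ R p`, right multiplication by `e` is a projection of `R / R p` with kernel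
`J / R p`. -/
lemma exists_projection {K : Type*} [DivisionRing K] (Δ : Set K) (p : K[X])
    (hp : IsMinPolyOf Δ p) (J : Ideal K[X]) :
    ∃ e : K[X], 1 - e ∈ J ∧ ∀ x ∈ J, ∀ a ∈ Δ, (x * e).eval a = 0 := by
  obtain ⟨L, hLJ, hL⟩ := exists_complement Δ p hp J
  have h1 : (1 : K[X]) ∈ L ⊔ J := hLJ ▸ Submodule.mem_top
  obtain ⟨e, he, j, hj, hej⟩ := Submodule.mem_sup.mp h1
  have hj' : 1 - e = j := by rw [← hej]; abel
  refine ⟨e, hj' ▸ hj, fun x hx => hL _ (L.mul_mem_left x he) ?_⟩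
  have : x * e = x - x * j := by rw [← hj', mul_sub, mul_one]; abel
  rw [this]
  exact J.sub_mem hx (J.mul_mem_left x hj)

/-- A polynomial vanishing on `V(h)` lies in `R p + R h` for every minimal polynomial `p`. -/
lemma mem_sup_of_vanishing {K : Type*} [DivisionRing K] (Δ : Set K) (p h r : K[X])
    (hp : IsMinPolyOf Δ p) (hr : ∀ a, h.eval a = 0 → r.eval a = 0) :
    ∃ u v : K[X], r = u * p + v * h := by
  let J : Ideal K[X] := Ideal.span {p} ⊔ Ideal.span {h}
  obtain ⟨e, he, hJ⟩ := exists_projection Δ p hp J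
  have hpJ : p ∈ J := (le_sup_left : _ ≤ J) (Ideal.mem_span_singleton_self p)
  have hhJ : h ∈ J := (le_sup_right : _ ≤ J) (Ideal.mem_span_singleton_self h)
  have hre : ∀ a ∈ Δ, (r * e).eval a = 0 := by
    intro a ha
    have hhe := hJ h hhJ a ha
    rw [eval_mul_conj] at hhe ⊢
    rcases mul_eq_zero.mp hhe with h0 | h0
    · rw [hr _ h0, zero_mul]
    · rw [h0, mul_zero]
  obtain ⟨s, hs⟩ := (hp.2 _).mp hre
  have hrJ : r ∈ J := by
    have : r = s * p + r * (1 - e) := by rw [← hs, mul_sub, mul_one]; abel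
    rw [this]
    exact J.add_mem (J.mul_mem_left _ hpJ) (J.mul_mem_left _ he)
  obtain ⟨y, hy, z, hz, hyz⟩ := Submodule.mem_sup.mp hrJ
  obtain ⟨u, rfl⟩ := Submodule.mem_span_singleton.mp hy
  obtain ⟨v, rfl⟩ := Submodule.mem_span_singleton.mp hz
  exact ⟨u, v, hyz.symm⟩

/-- The dimension count for the map `R / R q → R / R p` given by right multiplication by `h`. -/
lemma natDegree_le_of_mem {K : Type*} [DivisionRing K] (p q h r u v w : K[X])
    (hq : q.Monic) (hr : r ≠ 0) (hw : q * h = w * p) (huv : r = u * p + v * h) :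
    p.natDegree ≤ q.natDegree + r.natDegree := by
  by_contra! hlt
  have hfin : ∀ n, FiniteDimensional K (degreeLT K n) := fun n =>
    Module.Finite.equiv (degreeLTEquiv K n).symm
  have hrank : ∀ n, Module.finrank K (degreeLT K n) = n := fun n => by
    rw [(degreeLTEquiv K n).finrank_eq, Module.finrank_fin_fun]
  let I : Ideal K[X] := Ideal.span {p}
  -- `φ x n` is the `K`-linear map `y ↦ y x mod R p` on polynomials `y` of degree `< n`.
  let φ (x : K[X]) (n : ℕ) : degreeLT K n →ₗ[K] K[X] ⧸ I :=
    (I.mkQ.restrictScalars K ∘ₗ (LinearMap.toSpanSingleton K[X] K[X] x).restrictScalars K) ∘ₗ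
      (degreeLT K n).subtype
  have hφ : ∀ x n (y : degreeLT K n), φ x n y = I.mkQ ((y : K[X]) * x) := fun x n y => rfl
  have hinj : Function.Injective (φ r (q.natDegree + 1)) := by
    rw [← LinearMap.ker_eq_bot, LinearMap.ker_eq_bot']
    rintro ⟨y, hy⟩ h0
    rw [hφ, Submodule.mkQ_apply, Submodule.Quotient.mk_eq_zero] at h0
    obtain ⟨s, hs⟩ := Submodule.mem_span_singleton.mp h0
    simp only [smul_eq_mul] at hs
    rw [Submodule.mk_eq_zero]
    by_contra hy0
    have hyr : y * r ≠ 0 := mul_ne_zero hy0 hr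
    rw [← hs] at hyr
    have hdeg := congrArg natDegree hs
    rw [natDegree_mul (left_ne_zero_of_mul hyr) (right_ne_zero_of_mul hyr),
      natDegree_mul hy0 hr] at hdeg
    have hylt : y.natDegree < q.natDegree + 1 := by
      rw [mem_degreeLT, degree_eq_natDegree hy0] at hy
      exact_mod_cast hy
    omega
  have hrange : LinearMap.range (φ r (q.natDegree + 1)) ≤ LinearMap.range (φ h q.natDegree) := by
    rintro _ ⟨y, rfl⟩
    obtain ⟨s, b, hsb, hb⟩ := exists_right_division q hq ((y : K[X]) * v)
    refine ⟨⟨b, hb⟩, ?_⟩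
    rw [hφ, hφ, Submodule.mkQ_apply, Submodule.mkQ_apply, eq_comm, Submodule.Quotient.eq]
    refine Submodule.mem_span_singleton.mpr ⟨y * u + s * w, ?_⟩
    have : (y : K[X]) * r = y * u * p + s * w * p + b * h := by
      rw [huv, mul_add, ← mul_assoc, ← mul_assoc, hsb, add_mul, mul_assoc s q h, hw, ← mul_assoc,
        add_assoc]
    rw [this, smul_eq_mul, add_mul]
    abel
  have h1 := LinearMap.finrank_range_of_inj hinj
  have h2 := Submodule.finrank_mono hrange
  have h3 := LinearMap.finrank_range_le (φ h q.natDegree)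
  rw [hrank] at h1 h3
  omega

/-- **Third Rank Theorem.** For nonzero `g, h`, `rk V(gh) ≤ rk V(g) + rk V(h)`. -/
theorem stmt15 {K : Type*} [DivisionRing K] (g h : K[X]) (hg : g ≠ 0) (hh : h ≠ 0)
    (p q r : K[X])
    (hp : IsMinPolyOf (zeroSet (g * h)) p)
    (hq : IsMinPolyOf (zeroSet g) q)
    (hr : IsMinPolyOf (zeroSet h) r) :
    p.natDegree ≤ q.natDegree + r.natDegree := by
  have hq0 : ∀ a, g.eval a = 0 → q.eval a = 0 := (hq.2 q).mpr ⟨1, (one_mul q).symm⟩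
  have hr0 : ∀ a, h.eval a = 0 → r.eval a = 0 := (hr.2 r).mpr ⟨1, (one_mul r).symm⟩
  have hqh : ∀ a ∈ zeroSet (g * h), (q * h).eval a = 0 := by
    intro a ha
    change (g * h).eval a = 0 at ha
    rw [eval_mul_conj] at ha ⊢
    rcases mul_eq_zero.mp ha with h0 | h0
    · rw [hq0 _ h0, zero_mul]
    · rw [h0, mul_zero]
  obtain ⟨w, hw⟩ := (hp.2 _).mp hqh
  obtain ⟨u, v, huv⟩ := mem_sup_of_vanishing _ p h r hp hr0
  exact natDegree_le_of_mem p q h r u v w hq.1 hr.1.ne_zero hw huv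
end

section
/- Let K be a division ring and R = K[t]. Let Γ, Π, Δ ⊆ K be algebraic sets with Γ and Π full and Δ ⊆ Γ. If x ∈ Γ is P-dependent on Π ∪ Δ, then x is P-dependent on (Γ ∩ Π) ∪ Δ. -/
/-!
Write `I(A)` for the left ideal of polynomials vanishing on `A`. The theorem reduces to the
identity `I(Γ ∩ P) = I(Γ) + I(P)` for full algebraic sets: if `g` vanishes on `(Γ ∩ P) ∪ Δ`, write
`g = u + v` with `u ∈ I(Γ)` and `v ∈ I(P)`; then `v = g - u` vanishes on `P ∪ Δ`, hence at `x`, and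
`u` vanishes at `x ∈ Γ`.

For the identity, the quotient `K[X] ⧸ I(Γ)` is semisimple, because a degree argument shows that
`I(Γ) = I(s)` for a finite `s ⊆ Γ` (`exists_finset_vanishing_le`), so the quotient embeds in a
finite product of the simple modules `K[X] ⧸ I({a})`. Consequently any left ideal `J ⊇ I(Γ)` is an
intersection of maximal left ideals. A maximal left ideal containing `I(s)` is itself of the form
`I({b})` with `b` a conjugate of some `a ∈ s` (`exists_eq_vanishing_singleton`), by the product
formula `(r * n)(a) = r(c a c⁻¹) c`, where `c = n(a) ≠ 0`. For `J = I(Γ) + I(P)` the points `b`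
arising in this way lie in `Γ ∩ P` by fullness.
-/

open Polynomial

/-- `Δ` is an algebraic subset of `K`: some nonzero polynomial vanishes on it. -/
def IsAlgebraicSet {K : Type*} [DivisionRing K] (Δ : Set K) : Prop :=
  ∃ f : K[X], f ≠ 0 ∧ ∀ a ∈ Δ, f.eval a = 0

/-- `x` is polynomially dependent (P-dependent) on `A`: every polynomial vanishing on
`A` vanishes at `x`. -/
def PDep {K : Type*} [DivisionRing K] (x : K) (A : Set K) : Prop :=
  ∀ g : K[X], (∀ a ∈ A, g.eval a = 0) → g.eval x = 0

section Vanishing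

variable {K : Type*} [DivisionRing K]

/-- The product formula: evaluation at `a` of a product whose right factor does not vanish at `a`
is evaluation of the left factor at a conjugate of `a`. -/
lemma eval_mul_conj_s17 (r n : K[X]) (a : K) (h : n.eval a ≠ 0) :
    (r * n).eval a = r.eval (n.eval a * a * (n.eval a)⁻¹) * n.eval a := by
  induction r using Polynomial.induction_on' with
  | add p q hp hq => rw [add_mul, eval_add, hp, hq, eval_add, add_mul]
  | monomial k c =>
    have hpow : ∀ k : ℕ, n.eval a * a ^ k
        = (n.eval a * a * (n.eval a)⁻¹) ^ k * n.eval a := by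
      intro k
      induction k with
      | zero => simp
      | succ k ih =>
        rw [pow_succ, ← mul_assoc, ih, pow_succ]
        simp [mul_assoc, h]
    rw [← C_mul_X_pow_eq_monomial, mul_assoc, eval_C_mul, X_pow_mul, eval_mul_X_pow, hpow,
      eval_C_mul, eval_X_pow]
    exact (mul_assoc _ _ _).symm

lemma eval_mul_eq_zero_of_right (r n : K[X]) (a : K) (h : n.eval a = 0) :
    (r * n).eval a = 0 := by
  induction r using Polynomial.induction_on' with
  | add p q hp hq => rw [add_mul, eval_add, hp, hq, add_zero]
  | monomial k c =>
    rw [← C_mul_X_pow_eq_monomial, mul_assoc, eval_C_mul, X_pow_mul, eval_mul_X_pow, h]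
    simp

/-- The left ideal `I(A)` of polynomials vanishing on `A`. (Over a noncommutative ring `Ideal`
means left ideal.) -/
def vanishing (A : Set K) : Ideal K[X] where
  carrier := {g | ∀ a ∈ A, g.eval a = 0}
  add_mem' := fun hp hq a ha => by rw [eval_add, hp a ha, hq a ha, add_zero]
  zero_mem' := fun a _ => eval_zero
  smul_mem' := fun r n hn a ha => eval_mul_eq_zero_of_right r n a (hn a ha)

lemma mem_vanishing {A : Set K} {g : K[X]} : g ∈ vanishing A ↔ ∀ a ∈ A, g.eval a = 0 := Iff.rfl

lemma mem_vanishing_singleton {b : K} {g : K[X]} : g ∈ vanishing {b} ↔ g.eval b = 0 := by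
  simp [mem_vanishing]

lemma isCoatom_vanishing_singleton (b : K) : IsCoatom (vanishing {b} : Ideal K[X]) := by
  refine ⟨fun h => ?_, fun m hm => ?_⟩
  · have h1 : (1 : K[X]) ∈ vanishing {b} := by rw [h]; trivial
    simp [mem_vanishing_singleton] at h1
  · obtain ⟨hle, g, hgm, hg⟩ := SetLike.lt_iff_le_and_exists.1 hm
    rw [mem_vanishing_singleton] at hg
    rw [Ideal.eq_top_iff_one]
    have h1 : 1 - C (g.eval b)⁻¹ * g ∈ m := by
      apply hle
      rw [mem_vanishing_singleton, eval_sub, eval_C_mul, inv_mul_cancel₀ hg, eval_one, sub_self]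
    simpa using m.add_mem h1 (m.mul_mem_left (C (g.eval b)⁻¹) hgm)

/-- Right division with remainder, in ideal form: a left ideal `S` containing a nonzero
polynomial `p` whose degree is minimal in a left ideal `S'` contains all of `S'`. -/
lemma le_of_minimal_degree {S S' : Ideal K[X]} (hSS' : S ≤ S') {p : K[X]} (hp : p ∈ S)
    (hp0 : p ≠ 0) (hmin : ∀ g ∈ S', g ≠ 0 → p.natDegree ≤ g.natDegree) : S' ≤ S := by
  intro g
  induction hd : g.degree using WellFoundedLT.induction generalizing g with
  | ind d ih =>
    intro hg
    by_cases hg0 : g = 0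
    · rw [hg0]; exact S.zero_mem
    have hle := hmin g hg hg0
    -- `q * p` has the leading term of `g`
    set q : K[X] := C (g.leadingCoeff * p.leadingCoeff⁻¹) * X ^ (g.natDegree - p.natDegree)
      with hq
    have hlp : p.leadingCoeff ≠ 0 := leadingCoeff_ne_zero.2 hp0
    have hlg : g.leadingCoeff ≠ 0 := leadingCoeff_ne_zero.2 hg0
    have hlq : q.leadingCoeff = g.leadingCoeff * p.leadingCoeff⁻¹ := by
      rw [hq, leadingCoeff_C_mul_X_pow]
    have hqd : q.natDegree = g.natDegree - p.natDegree :=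
      natDegree_C_mul_X_pow _ _ (mul_ne_zero hlg (inv_ne_zero hlp))
    have hq0 : q ≠ 0 := by
      rw [← leadingCoeff_ne_zero, hlq]
      exact mul_ne_zero hlg (inv_ne_zero hlp)
    have hqp : q * p ∈ S := S.mul_mem_left q hp
    have hlt : (g - q * p).degree < g.degree := by
      apply degree_sub_lt_left _ hg0
      · rw [leadingCoeff_mul, hlq, inv_mul_cancel_right₀ hlp]
      · rw [degree_eq_natDegree hg0, degree_eq_natDegree (mul_ne_zero hq0 hp0),
          natDegree_mul hq0 hp0, hqd, Nat.sub_add_cancel hle]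
    have := ih _ (hd ▸ hlt) rfl (S'.sub_mem hg (hSS' hqp))
    simpa using S.add_mem this hqp

/-- The vanishing ideal of an algebraic set is that of a finite subset. Otherwise, enlarging finite
subsets `s ⊆ Γ` one point at a time would make the minimal degree of `I(s)` grow without bound,
although it is bounded by the degree of any nonzero polynomial vanishing on `Γ`. -/
lemma exists_finset_vanishing_le {Γ : Set K} (hΓ : IsAlgebraicSet Γ) :
    ∃ s : Finset K, (s : Set K) ⊆ Γ ∧ vanishing (s : Set K) ≤ vanishing Γ := by
  classical
  obtain ⟨f, hf0, hf⟩ := hΓ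
  by_contra! hcon
  have key : ∀ d : ℕ, ∃ s : Finset K, (s : Set K) ⊆ Γ ∧
      ∀ g ∈ vanishing (s : Set K), g ≠ 0 → d ≤ g.natDegree := by
    intro d
    induction d with
    | zero => exact ⟨∅, by simp, fun _ _ _ => Nat.zero_le _⟩
    | succ d ih =>
      obtain ⟨s, hs, hsd⟩ := ih
      obtain ⟨g, hgs, hg⟩ := SetLike.not_le_iff_exists.1 (hcon s hs)
      rw [mem_vanishing] at hg
      push Not at hg
      obtain ⟨a, ha, hga⟩ := hg
      refine ⟨insert a s, ?_, fun p hp hp0 => ?_⟩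
      · rw [Finset.coe_insert]
        exact Set.insert_subset ha hs
      · by_contra! hlt
        have hle : vanishing ((insert a s : Finset K) : Set K) ≤ vanishing (s : Set K) :=
          fun q hq b hb => hq b (by simpa using Or.inr hb)
        have := le_of_minimal_degree hle hp hp0
          (fun q hq hq0 => (Nat.lt_succ_iff.1 hlt).trans (hsd q hq hq0)) hgs
        exact hga (this a (by simp))
  obtain ⟨s, hs, hsd⟩ := key (f.natDegree + 1)
  have := hsd f (fun a ha => hf a (hs ha)) hf0
  omega

/-- Choosing `s` minimal makes `I(s \ {a})` and `m` comaximal; with `1 = n + y` the corresponding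
decomposition, `r * n ∈ I({a})` forces `r ∈ m`, so `m` contains the point ideal of the conjugate of
`a` by `n(a)`. -/
lemma exists_eq_vanishing_singleton (s : Finset K) {m : Ideal K[X]} (hm : IsCoatom m)
    (hs : vanishing (s : Set K) ≤ m) : ∃ b : K, m = vanishing {b} := by
  classical
  induction s using Finset.induction_on with
  | empty =>
    refine absurd (top_unique (le_trans ?_ hs)) hm.1
    intro g _ a ha
    simp at ha
  | insert a s _ ih =>
    by_cases hN : vanishing (s : Set K) ≤ m
    · exact ih hN
    have htop : vanishing (s : Set K) ⊔ m = ⊤ :=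
      hm.2 _ (lt_of_le_of_ne le_sup_right fun h => hN (h ▸ le_sup_left))
    obtain ⟨n, hn, y, hy, hny⟩ :=
      Submodule.mem_sup.1 (htop ▸ Submodule.mem_top : (1 : K[X]) ∈ vanishing (s : Set K) ⊔ m)
    have hmem : ∀ q ∈ vanishing (s : Set K), q.eval a = 0 → q ∈ m := by
      intro q hq hqa
      apply hs
      intro b hb
      rw [Finset.coe_insert, Set.mem_insert_iff] at hb
      rcases hb with rfl | hb
      · exact hqa
      · exact hq b hb
    have hc : n.eval a ≠ 0 := fun h =>
      hm.1 ((Ideal.eq_top_iff_one m).2 (hny ▸ m.add_mem (hmem n hn h) hy))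
    refine ⟨n.eval a * a * (n.eval a)⁻¹, ?_⟩
    have hle : vanishing {n.eval a * a * (n.eval a)⁻¹} ≤ m := by
      intro r hr
      rw [mem_vanishing_singleton] at hr
      have h1 : r * n ∈ m := hmem _ (Ideal.mul_mem_left _ r hn) (by
        rw [eval_mul_conj_s17 r n a hc, hr, zero_mul])
      have h2 : r = r * n + r * y := by rw [← mul_add, hny, mul_one]
      rw [h2]
      exact m.add_mem h1 (m.mul_mem_left r hy)
    exact (((isCoatom_vanishing_singleton _).le_iff.1 hle).resolve_left hm.1)

lemma isSemisimpleModule_quotient (s : Finset K) {J : Ideal K[X]}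
    (hs : vanishing (s : Set K) ≤ J) : IsSemisimpleModule K[X] (K[X] ⧸ J) := by
  have hsimple : ∀ a : s, IsSimpleModule K[X] (K[X] ⧸ (vanishing {(a : K)} : Ideal K[X])) :=
    fun a => isSimpleModule_iff_isCoatom.2 (isCoatom_vanishing_singleton _)
  let φ : K[X] →ₗ[K[X]] (∀ a : s, K[X] ⧸ (vanishing {(a : K)} : Ideal K[X])) :=
    LinearMap.pi fun a => Submodule.mkQ _
  have hker : LinearMap.ker φ ≤ J := by
    intro g hg
    apply hs
    intro a ha
    have h1 := congrFun (LinearMap.mem_ker.1 hg) ⟨a, ha⟩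
    have h2 : g ∈ (vanishing {a} : Ideal K[X]) := by
      simpa [φ] using h1
    exact mem_vanishing_singleton.1 h2
  have h1 : IsSemisimpleModule K[X] (K[X] ⧸ LinearMap.ker φ) :=
    IsSemisimpleModule.of_injective ((LinearMap.ker φ).liftQ φ le_rfl)
      (LinearMap.ker_eq_bot.1 (Submodule.ker_liftQ_eq_bot _ _ _ le_rfl))
  exact IsSemisimpleModule.of_surjective (Submodule.factor hker) (Submodule.factor_surjective hker)

/-- A left ideal containing `I(Γ)`, with `Γ` algebraic, is an intersection of point ideals. -/
lemma exists_point_separating {Γ : Set K} (hΓ : IsAlgebraicSet Γ) {J : Ideal K[X]}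
    (hJ : vanishing Γ ≤ J) {g : K[X]} (hg : g ∉ J) :
    ∃ b : K, J ≤ vanishing {b} ∧ g.eval b ≠ 0 := by
  obtain ⟨s, -, hs⟩ := exists_finset_vanishing_le hΓ
  have hss := isSemisimpleModule_quotient s (hs.trans hJ)
  have hjac := IsSemisimpleModule.jacobson_eq_bot K[X] (K[X] ⧸ J)
  have hg' : J.mkQ g ∉ Module.jacobson K[X] (K[X] ⧸ J) := by
    rw [hjac]
    simpa using hg
  rw [Module.jacobson, Submodule.mem_sInf] at hg'
  push Not at hg'
  obtain ⟨m, hm, hgm⟩ := hg'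
  have hco : IsCoatom (m.comap J.mkQ) :=
    (Submodule.isCoatom_comap_iff J.mkQ_surjective).2 hm
  have hJm : J ≤ m.comap J.mkQ := Submodule.le_comap_mkQ J m
  obtain ⟨b, hb⟩ := exists_eq_vanishing_singleton s hco ((hs.trans hJ).trans hJm)
  refine ⟨b, hb ▸ hJm, fun h => hgm ?_⟩
  have : g ∈ m.comap J.mkQ := hb ▸ mem_vanishing_singleton.2 h
  exact this

lemma vanishing_inter_le_sup {Γ P : Set K} (hΓ : IsAlgebraicSet Γ)
    (hΓfull : ∀ x : K, PDep x Γ → x ∈ Γ) (hPfull : ∀ x : K, PDep x P → x ∈ P) :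
    vanishing (Γ ∩ P) ≤ vanishing Γ ⊔ vanishing P := by
  intro g hg
  by_contra hgJ
  obtain ⟨b, hb, hgb⟩ := exists_point_separating hΓ le_sup_left hgJ
  refine hgb (hg b ⟨hΓfull b fun q hq => ?_, hPfull b fun q hq => ?_⟩)
  · exact mem_vanishing_singleton.1 (hb (Submodule.mem_sup_left hq))
  · exact mem_vanishing_singleton.1 (hb (Submodule.mem_sup_right hq))

end Vanishing

/-- (Modular law for full algebraic sets.) If `Γ, P` are full algebraic sets, `Δ ⊆ Γ`
is algebraic, and `x ∈ Γ` is P-dependent on `P ∪ Δ`, then `x` is P-dependent on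
`(Γ ∩ P) ∪ Δ`. -/
theorem stmt17 {K : Type*} [DivisionRing K] (Γ P Δ : Set K)
    (hΓ : IsAlgebraicSet Γ) (hP : IsAlgebraicSet P) (hΔ : IsAlgebraicSet Δ)
    (hΓfull : ∀ x : K, PDep x Γ → x ∈ Γ)
    (hPfull : ∀ x : K, PDep x P → x ∈ P)
    (hsub : Δ ⊆ Γ) (x : K) (hx : x ∈ Γ) (hdep : PDep x (P ∪ Δ)) :
    PDep x ((Γ ∩ P) ∪ Δ) := by
  intro g hg
  obtain ⟨u, hu, v, hv, rfl⟩ := Submodule.mem_sup.1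
    (vanishing_inter_le_sup hΓ hΓfull hPfull (fun a ha => hg a (Or.inl ha)))
  have hvx : v.eval x = 0 := by
    refine hdep v fun a ha => ?_
    rcases ha with ha | ha
    · exact hv a ha
    · have h := hg a (Or.inr ha)
      rwa [eval_add, hu a (hsub ha), zero_add] at h
  rw [eval_add, hu x hx, hvx, add_zero]
end

section
/- Let K be a division ring, R = K[t], and let a, b ∈ K and c ∈ K*. The following are equivalent: (1) the metro equation ax − xb = c has a solution x ∈ K; (2) the quadratic (t − c·b·c⁻¹)·(t − a) is a Wedderburn polynomial; (3) 1 ∈ R·(t − c·b·c⁻¹) + (t − a)·R. -/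
/-!
Put `d = c b c⁻¹`. Substituting `x = y c` turns the metro equation into `a y - y d = 1`
(`metro_iff`), so both equivalences reduce to this normalised form.

*Ideal membership.* If `a y - y d = 1` then `y (t - d) + (t - a) (-y) = 1`. Conversely,
evaluating `p (t - d) + (t - a) q = 1` at `d` kills the first summand and leaves
`q(d) d - a q(d) = 1`.

*Wedderburn property.* Let `f = (t - d)(t - a)`. Then `f(r) = (r - a) r - d (r - a)`
(`eval_quadratic`), and a root `r ≠ a` of `f` is the same thing as a solution `y = -(r - a)⁻¹` of
`a y - y d = 1` (`metro_iff_exists_root`). If `f` is a W-polynomial, such a root exists, since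
otherwise `t - a`, of degree smaller than `f`, would vanish on `V(f)`. Conversely, if `g` vanishes
at `a` and at such an `r`, dividing twice on the right gives `g = q f + e (t - a)` with `e`
constant, and evaluation at `r` gives `e (r - a) = 0`, so `e = 0`.
-/

open Polynomial

/-- `f` is a Wedderburn polynomial: the minimal polynomial of its own zero set. -/
def IsWPoly {K : Type*} [DivisionRing K] (f : K[X]) : Prop :=
  IsMinPolyOf (zeroSet f) f

/-- The remainder theorem for right division by `X - C a` over a noncommutative ring. -/
theorem exists_eq_mul_X_sub_C_add {K : Type*} [DivisionRing K] (p : K[X]) (a : K) :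
    ∃ q : K[X], p = q * (X - C a) + C (p.eval a) := by
  induction p using Polynomial.induction_on' with
  | add p q hp hq =>
    obtain ⟨u, hu⟩ := hp
    obtain ⟨v, hv⟩ := hq
    refine ⟨u + v, ?_⟩
    rw [eval_add, C_add, add_mul]
    nth_rewrite 1 [hu]
    nth_rewrite 1 [hv]
    abel
  | monomial n k =>
    rw [eval_monomial]
    induction n generalizing k with
    | zero => exact ⟨0, by simp⟩
    | succ n ih =>
      -- `k t ^ (n + 1) = k t ^ n (t - a) + (k a) t ^ n`
      obtain ⟨u, hu⟩ := ih (k * a)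
      refine ⟨monomial n k + u, ?_⟩
      rw [pow_succ', ← mul_assoc, add_mul, add_assoc, ← hu, mul_sub, monomial_mul_X,
        monomial_mul_C, sub_add_cancel]

theorem eval_mul_eq_zero_of_right_s18 {K : Type*} [DivisionRing K] (q f : K[X]) (r : K)
    (h : f.eval r = 0) : (q * f).eval r = 0 := by
  obtain ⟨u, hu⟩ := exists_eq_mul_X_sub_C_add f r
  rw [hu, h, C_0, add_zero, ← mul_assoc, eval_mul_X_sub_C]

theorem eval_X_sub_C_mul {K : Type*} [DivisionRing K] (d r : K) (g : K[X]) :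
    ((X - C d) * g).eval r = g.eval r * r - d * g.eval r := by
  rw [sub_mul, eval_sub, eval_C_mul, X_mul, eval_mul_X]

theorem eval_quadratic {K : Type*} [DivisionRing K] (a d r : K) :
    ((X - C d) * (X - C a)).eval r = (r - a) * r - d * (r - a) := by
  rw [eval_X_sub_C_mul, eval_sub, eval_X, eval_C]

theorem metro_iff {K : Type*} [DivisionRing K] (a b c : K) (hc : c ≠ 0) :
    (∃ x : K, a * x - x * b = c) ↔ ∃ y : K, a * y - y * (c * b * c⁻¹) = 1 := by
  constructor
  · rintro ⟨x, hx⟩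
    refine ⟨x * c⁻¹, ?_⟩
    have h : x * c⁻¹ * (c * b * c⁻¹) = x * b * c⁻¹ := by
      simp only [mul_assoc, inv_mul_cancel_left₀ hc]
    rw [h, ← mul_assoc, ← sub_mul, hx, mul_inv_cancel₀ hc]
  · rintro ⟨y, hy⟩
    refine ⟨y * c, ?_⟩
    have h : y * c * b = y * (c * b * c⁻¹) * c := by
      simp only [mul_assoc, inv_mul_cancel₀ hc, mul_one]
    rw [h, ← mul_assoc, ← sub_mul, hy, one_mul]

theorem metro_iff_exists_root {K : Type*} [DivisionRing K] (a d : K) :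
    (∃ y : K, a * y - y * d = 1) ↔
      ∃ r : K, r ≠ a ∧ ((X - C d) * (X - C a)).eval r = 0 := by
  simp only [eval_quadratic]
  constructor
  · rintro ⟨y, hy⟩
    have hy0 : y ≠ 0 := by
      rintro rfl
      simp at hy
    refine ⟨a - y⁻¹, by simpa using hy0, ?_⟩
    have h : y⁻¹ * (a * y - y * d) * y⁻¹ = y⁻¹ * 1 * y⁻¹ := by rw [hy]
    have h1 : y⁻¹ * (a * y - y * d) * y⁻¹ = y⁻¹ * a - d * y⁻¹ := by
      rw [mul_sub, inv_mul_cancel_left₀ hy0, sub_mul, mul_assoc, mul_assoc, mul_inv_cancel₀ hy0,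
        mul_one]
    rw [h1, mul_one] at h
    have h2 : (a - y⁻¹ - a) * (a - y⁻¹) - d * (a - y⁻¹ - a)
        = y⁻¹ * y⁻¹ - (y⁻¹ * a - d * y⁻¹) := by noncomm_ring
    rw [h2, h, sub_self]
  · rintro ⟨r, hr, h⟩
    have hz : r - a ≠ 0 := sub_ne_zero.mpr hr
    obtain ⟨z, rfl⟩ : ∃ z, r = z + a := ⟨r - a, by simp⟩
    rw [add_sub_cancel_right] at h hz
    refine ⟨-z⁻¹, ?_⟩
    have h1 : z⁻¹ * (z * (z + a)) * z⁻¹ = z⁻¹ * (d * z) * z⁻¹ := by rw [sub_eq_zero.mp h]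
    rw [inv_mul_cancel_left₀ hz, add_mul, mul_inv_cancel₀ hz, mul_assoc, mul_assoc,
      mul_inv_cancel₀ hz, mul_one] at h1
    rw [mul_neg, neg_mul, ← h1]
    abel

theorem isWPoly_quadratic_iff {K : Type*} [DivisionRing K] (a d : K) :
    IsWPoly ((X - C d) * (X - C a)) ↔
      ∃ r : K, r ≠ a ∧ ((X - C d) * (X - C a)).eval r = 0 := by
  have hm : ((X - C d) * (X - C a)).Monic := (monic_X_sub_C d).mul (monic_X_sub_C a)
  constructor
  · rintro ⟨-, h⟩
    by_contra! hne
    obtain ⟨q, hq⟩ := (h (X - C a)).mp fun r hr => by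
      have hra : r = a := by
        by_contra hra
        exact hne r hra hr
      simp [hra]
    -- cancelling `t - a` would make `t - d` a unit
    have h1 : q * (X - C d) = 1 := by
      apply mul_right_cancel₀ (X_sub_C_ne_zero a)
      rw [one_mul, mul_assoc, ← hq]
    have h2 := congrArg (eval d) h1
    rw [eval_mul_X_sub_C, eval_one] at h2
    exact zero_ne_one h2
  · rintro ⟨r, hra, hr⟩
    refine ⟨hm, fun g => ⟨fun hg => ?_, ?_⟩⟩
    · have hga : g.eval a = 0 := hg a (eval_mul_X_sub_C a)
      have hgr : g.eval r = 0 := hg r hr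
      obtain ⟨u, hu⟩ := exists_eq_mul_X_sub_C_add g a
      obtain ⟨v, hv⟩ := exists_eq_mul_X_sub_C_add u d
      rw [hga, C_0, add_zero] at hu
      have hg2 : g = v * ((X - C d) * (X - C a)) + C (u.eval d) * (X - C a) := by
        rw [← mul_assoc, ← add_mul, ← hv, hu]
      have he : u.eval d = 0 := by
        rw [hg2, eval_add, eval_mul_eq_zero_of_right_s18 _ _ _ hr, zero_add, eval_C_mul, eval_sub,
          eval_X, eval_C] at hgr
        exact (mul_eq_zero.mp hgr).resolve_right (sub_ne_zero.mpr hra)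
      exact ⟨v, by rw [hg2, he, C_0, zero_mul, add_zero]⟩
    · rintro ⟨q, rfl⟩ s hs
      exact eval_mul_eq_zero_of_right_s18 _ _ _ hs

theorem metro_iff_one_mem {K : Type*} [DivisionRing K] (a d : K) :
    (∃ y : K, a * y - y * d = 1) ↔
      ∃ p q : K[X], p * (X - C d) + (X - C a) * q = 1 := by
  constructor
  · rintro ⟨y, hy⟩
    refine ⟨C y, -C y, ?_⟩
    rw [← C_1, ← hy, C_sub, C_mul, C_mul, mul_neg, sub_mul, mul_sub, X_mul_C]
    abel
  · rintro ⟨p, q, h⟩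
    have h1 := congrArg (eval d) h
    rw [eval_add, eval_mul_X_sub_C, eval_X_sub_C_mul, eval_one, zero_add] at h1
    refine ⟨-q.eval d, ?_⟩
    rw [← h1, mul_neg, neg_mul]
    abel

/-- For `a, b ∈ K`, `c ∈ K*`, TFAE: (1) the metro equation `ax − xb = c` has a
solution in `K`; (2) `(t − c·b·c⁻¹)(t − a)` is a W-polynomial;
(3) `1 ∈ R·(t − c·b·c⁻¹) + (t − a)·R`. -/
theorem stmt18 {K : Type*} [DivisionRing K] (a b c : K) (hc : c ≠ 0) :
    ((∃ x : K, a * x - x * b = c) ↔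
      IsWPoly ((X - C (c * b * c⁻¹)) * (X - C a))) ∧
    ((∃ x : K, a * x - x * b = c) ↔
      ∃ p q : K[X], p * (X - C (c * b * c⁻¹)) + (X - C a) * q = 1) := by
  exact ⟨(metro_iff a b c hc).trans
      ((metro_iff_exists_root a _).trans (isWPoly_quadratic_iff a _).symm),
    (metro_iff a b c hc).trans (metro_iff_one_mem a _)⟩
end

section
/- Let K be a division ring and R = K[t]. Suppose b ∈ K is such that its conjugacy class Δ(b) = {d·b·d⁻¹ : d ∈ K*} is an algebraic set, and let a ∈ K ∖ Δ(b) and c ∈ K*. Then (t − c·b·c⁻¹)·(t − a) is a Wedderburn polynomial, and the metro equation ax − xb = c has a unique solution x ∈ K. -/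
/-!
Right multiplication by `b` makes `K` a left `K[X]`-module, in which `p = ∑ pᵢ Xⁱ` acts by
`d ↦ ∑ pᵢ d bⁱ = p(d b d⁻¹) d`. Hence a polynomial vanishes on the conjugacy class of `b` exactly
when it annihilates this module, and `X - a` acts by `x ↦ x b - a x`, which is injective because
`a` is not conjugate to `b`.

Let `f` be a nonzero annihilator of least degree and write `f = (X - a) q + r` with `r` constant.
If `r = 0`, injectivity of the action of `X - a` makes `q` an annihilator of smaller degree, which
is impossible. So `r ≠ 0`, and `(X - a) (q d) = - r d` for all `d` shows that `X - a` acts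
surjectively: the metro equation has a solution `x`, unique by injectivity.

The element `y = x b x⁻¹` is then a zero of `(X - c b c⁻¹) (X - a)` with `y ≠ a` and
`(y - a) y (y - a)⁻¹ = c b c⁻¹`. A polynomial vanishing at `a` and `y` is a left multiple
`q (X - a)` with `q(c b c⁻¹) = 0`, hence a left multiple of `(X - c b c⁻¹) (X - a)`.
-/

open Polynomial

/-- The action of `K[X]` on `K` in which scalars act by left multiplication and `X` acts by right
multiplication by `b`. -/
noncomputable def conjAction {K : Type*} [DivisionRing K] (b : K) :
    K[X] →+* AddMonoid.End K :=
  eval₂RingHom' (Module.toAddMonoidEnd K K) (AddMonoidHom.mulRight b) (by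
    intro s
    refine AddMonoidHom.ext fun d => ?_
    exact (mul_assoc s d b).symm)

section

variable {K : Type*} [DivisionRing K]

lemma conjAction_X (b d : K) : conjAction b X d = d * b :=
  DFunLike.congr_fun (eval₂_X (Module.toAddMonoidEnd K K) _) d

lemma conjAction_C (b s d : K) : conjAction b (C s) d = s * d :=
  DFunLike.congr_fun (eval₂_C (Module.toAddMonoidEnd K K) _) d

lemma conjAction_mul (b d : K) (p q : K[X]) :
    conjAction b (p * q) d = conjAction b p (conjAction b q d) := by
  rw [map_mul]; rfl

lemma conjAction_add (b d : K) (p q : K[X]) :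
    conjAction b (p + q) d = conjAction b p d + conjAction b q d := by
  rw [map_add]; rfl

lemma conjAction_X_sub_C (b a d : K) : conjAction b (X - C a) d = d * b - a * d := by
  rw [sub_eq_add_neg, ← C_neg, conjAction_add, conjAction_X, conjAction_C, neg_mul,
    ← sub_eq_add_neg]

lemma conjAction_X_pow (b d : K) (n : ℕ) : conjAction b (X ^ n) d = d * b ^ n := by
  induction n generalizing d with
  | zero => simp
  | succ n ih => rw [pow_succ, conjAction_mul, conjAction_X, ih, pow_succ', mul_assoc]

lemma conjAction_eq_eval (b d : K) (hd : d ≠ 0) (p : K[X]) :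
    conjAction b p d = p.eval (d * b * d⁻¹) * d := by
  induction p using Polynomial.induction_on' with
  | add p q hp hq => rw [conjAction_add, hp, hq, eval_add, add_mul]
  | monomial n s =>
    have hpow : ∀ n : ℕ, (d * b * d⁻¹) ^ n = d * b ^ n * d⁻¹ := by
      intro n
      induction n with
      | zero => simp [hd]
      | succ n ih => rw [pow_succ, ih, pow_succ]; simp [mul_assoc, hd]
    rw [eval_monomial, hpow, ← C_mul_X_pow_eq_monomial, conjAction_mul, conjAction_X_pow,
      conjAction_C]
    simp [mul_assoc, hd]

/-- The product formula for evaluation when the right factor is linear. -/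
lemma eval_mul_X_sub_C_of_ne (p : K[X]) (a y : K) (h : y - a ≠ 0) :
    (p * (X - C a)).eval y = p.eval ((y - a) * y * (y - a)⁻¹) * (y - a) := by
  have h1 := conjAction_eq_eval y 1 one_ne_zero (p * (X - C a))
  rw [conjAction_mul, conjAction_X_sub_C] at h1
  simp only [one_mul, mul_one, inv_one] at h1
  rw [← h1, conjAction_eq_eval y _ h]

lemma exists_right_div (p : K[X]) (a : K) : ∃ q : K[X], ∃ r : K, p = q * (X - C a) + C r := by
  induction p using Polynomial.induction_on' with
  | add p q hp hq =>
    obtain ⟨u, r, rfl⟩ := hp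
    obtain ⟨v, s, rfl⟩ := hq
    exact ⟨u + v, r + s, by rw [add_mul, C_add]; abel⟩
  | monomial n s =>
    induction n generalizing s with
    | zero => exact ⟨0, s, by simp⟩
    | succ n ih =>
      obtain ⟨q, r, h⟩ := ih (s * a)
      refine ⟨monomial n s + q, r, ?_⟩
      rw [add_mul, add_assoc, ← h, mul_sub, monomial_mul_X, monomial_mul_C]
      abel

/-- The factor theorem for right linear factors. -/
lemma exists_eq_mul_X_sub_C (p : K[X]) (a : K) (h : p.eval a = 0) :
    ∃ q : K[X], p = q * (X - C a) := by
  obtain ⟨q, r, rfl⟩ := exists_right_div p a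
  rw [eval_add, eval_mul_X_sub_C, zero_add, eval_C] at h
  exact ⟨q, by simp [h]⟩

lemma eval_mul_eq_zero_of_right_s19 (p q : K[X]) (y : K) (h : q.eval y = 0) :
    (p * q).eval y = 0 := by
  obtain ⟨u, rfl⟩ := exists_eq_mul_X_sub_C q y h
  rw [← mul_assoc, eval_mul_X_sub_C]

lemma metro_injective (a b : K) (ha : ∀ d : K, d ≠ 0 → a ≠ d * b * d⁻¹) (x : K)
    (h : x * b - a * x = 0) : x = 0 := by
  by_contra hx
  refine ha x hx ?_
  rw [sub_eq_zero.mp h, mul_assoc, mul_inv_cancel₀ hx, mul_one]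

lemma metro_surjective (a b c : K) (ha : ∀ d : K, d ≠ 0 → a ≠ d * b * d⁻¹)
    (halg : ∃ f : K[X], f ≠ 0 ∧ conjAction b f = 0) : ∃ x : K, a * x - x * b = c := by
  obtain ⟨f, ⟨hf0, hf⟩, hmin⟩ := WellFounded.has_min
    (measure (natDegree : K[X] → ℕ)).wf {f : K[X] | f ≠ 0 ∧ conjAction b f = 0} halg
  set q := f /ₘ (X - C a) with hq
  have hdiv : f %ₘ (X - C a) + (X - C a) * q = f := modByMonic_add_div f (X - C a)
  obtain ⟨r, hr⟩ : ∃ r, f %ₘ (X - C a) = C r := by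
    refine ⟨_, eq_C_of_degree_le_zero ?_⟩
    have := degree_modByMonic_lt f (monic_X_sub_C a)
    rw [degree_X_sub_C] at this
    exact Order.lt_succ_iff.mp this
  rw [hr] at hdiv
  have hact : ∀ d : K, r * d + (conjAction b q d * b - a * conjAction b q d) = 0 := by
    intro d
    have h1 := DFunLike.congr_fun hf d
    rw [← hdiv, conjAction_add, conjAction_C, conjAction_mul,
      conjAction_X_sub_C] at h1
    exact h1
  have hr0 : r ≠ 0 := by
    rintro rfl
    rw [C_0, zero_add] at hdiv
    have hq0 : q ≠ 0 := by
      rintro h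
      rw [h, mul_zero] at hdiv
      exact hf0 hdiv.symm
    have hqann : conjAction b q = 0 := by
      ext d
      have h1 := hact d
      rw [zero_mul, zero_add] at h1
      exact metro_injective a b ha _ h1
    refine hmin q ⟨hq0, hqann⟩ ?_
    change q.natDegree < f.natDegree
    rw [← hdiv, natDegree_mul (X_sub_C_ne_zero a) hq0, natDegree_X_sub_C]
    omega
  refine ⟨conjAction b q (r⁻¹ * c), ?_⟩
  have h1 := hact (r⁻¹ * c)
  rw [mul_inv_cancel_left₀ hr0] at h1
  rw [← sub_eq_zero, ← neg_eq_zero, ← h1]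
  abel

end

/-- If the conjugacy class `Δ(b)` is algebraic and `a ∉ Δ(b)`, `c ∈ K*`, then
`(t − c·b·c⁻¹)(t − a)` is a W-polynomial and the metro equation `ax − xb = c` has a
unique solution. -/
theorem stmt19 {K : Type*} [DivisionRing K] (a b c : K) (hc : c ≠ 0)
    (halg : IsAlgebraicSet {x : K | ∃ d : K, d ≠ 0 ∧ x = d * b * d⁻¹})
    (ha : a ∉ {x : K | ∃ d : K, d ≠ 0 ∧ x = d * b * d⁻¹}) :
    IsWPoly ((X - C (c * b * c⁻¹)) * (X - C a)) ∧
    ∃! x : K, a * x - x * b = c := by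
  have ha' : ∀ d : K, d ≠ 0 → a ≠ d * b * d⁻¹ := fun d hd h => ha ⟨d, hd, h⟩
  obtain ⟨f, hf0, hf⟩ := halg
  have hann : conjAction b f = 0 := by
    ext d
    rcases eq_or_ne d 0 with rfl | hd
    · rw [map_zero, map_zero]
    · rw [conjAction_eq_eval b d hd, hf _ ⟨d, hd, rfl⟩, zero_mul]; rfl
  obtain ⟨x, hx⟩ := metro_surjective a b c ha' ⟨f, hf0, hann⟩
  refine ⟨⟨(monic_X_sub_C _).mul (monic_X_sub_C _), fun g => ⟨fun hg => ?_, ?_⟩⟩,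
    x, hx, fun z hz => ?_⟩
  · have hx0 : x ≠ 0 := by
      rintro rfl
      exact hc (by simpa using hx.symm)
    obtain ⟨q, rfl⟩ := exists_eq_mul_X_sub_C g a (hg a (eval_mul_X_sub_C _))
    have hya : x * b * x⁻¹ - a = -(c * x⁻¹) := by
      rw [← hx, sub_mul, mul_assoc a, mul_inv_cancel₀ hx0, mul_one, neg_sub]
    have hne : x * b * x⁻¹ - a ≠ 0 := by
      rw [hya]
      exact neg_ne_zero.mpr (mul_ne_zero hc (inv_ne_zero hx0))
    have hconj : (x * b * x⁻¹ - a) * (x * b * x⁻¹) * (x * b * x⁻¹ - a)⁻¹ = c * b * c⁻¹ := by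
      rw [hya, inv_neg, neg_mul, neg_mul_neg, mul_inv_rev, inv_inv]
      simp [mul_assoc, hx0]
    have hroot := hg (x * b * x⁻¹) (by
      change eval _ _ = 0
      rw [eval_mul_X_sub_C_of_ne _ _ _ hne, hconj, eval_sub, eval_X, eval_C, sub_self, zero_mul])
    rw [eval_mul_X_sub_C_of_ne _ _ _ hne, hconj] at hroot
    obtain ⟨u, rfl⟩ := exists_eq_mul_X_sub_C q _ ((mul_eq_zero.mp hroot).resolve_right hne)
    exact ⟨u, mul_assoc _ _ _⟩
  · rintro ⟨q, rfl⟩ y hy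
    exact eval_mul_eq_zero_of_right_s19 _ _ _ hy
  · refine sub_eq_zero.mp (metro_injective a b ha' (z - x) ?_)
    rw [sub_mul, mul_sub, ← sub_eq_zero.mpr (hx.trans hz.symm)]
    abel
end
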